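/- Let (u_k) be a sequence of harmonic functions on the unit disc B₁ ⊂ ℝ², none identically zero, such that for every k the set {x ∈ B₁ : u_k(x) ≠ 0} has at most k₀ connected components. Then there exist a subsequence (u_{k_i}), a sequence of real numbers (α_{k_i}), and a harmonic function u on B₁ which is not identically zero, such that α_{k_i}·u_{k_i} converges to u uniformly on every compact subset of B₁. -/

import Mathlib

open MeasureTheory Metric Filter

/-- The Laplacian of `u : ℝⁿ → ℝ` at `x`, as the sum of second partial derivatives. -/
noncomputable def lapl {n : ℕ} (u : EuclideanSpace ℝ (Fin n) → ℝ)
    (x : EuclideanSpace ℝ (Fin n)) : ℝ :=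
  ∑ i, fderiv ℝ (fun y => fderiv ℝ u y (EuclideanSpace.single i 1)) x (EuclideanSpace.single i 1)

/-- `u` is harmonic on all of ℝⁿ: it is C² and its Laplacian vanishes identically. -/
def HarmonicFn {n : ℕ} (u : EuclideanSpace ℝ (Fin n) → ℝ) : Prop :=
  ContDiff ℝ 2 u ∧ ∀ x, lapl u x = 0

/-- `u` is harmonic on the (open) set `Ω`: it is C² on `Ω` and its Laplacian vanishes on `Ω`. -/
def HarmonicFnOn {n : ℕ} (u : EuclideanSpace ℝ (Fin n) → ℝ)
    (Ω : Set (EuclideanSpace ℝ (Fin n))) : Prop :=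
  ContDiffOn ℝ 2 u Ω ∧ ∀ x ∈ Ω, lapl u x = 0

/-- The set of connected components of a subset `S` of a topological space. -/
def nodalComponents {X : Type*} [TopologicalSpace X] (S : Set X) : Set (Set X) :=
  {C | ∃ x ∈ S, connectedComponentIn S x = C}

/-- `z - q` admits a continuous logarithm on `γ`. -/
def LogOnSet (γ : Set ℂ) (q : ℂ) : Prop :=
  ∃ L : ℂ → ℂ, ContinuousOn L γ ∧ ∀ z ∈ γ, Complex.exp (L z) = z - q

lemma log_branch_const {X : Type*} [TopologicalSpace X] {S : Set X} (hS : IsPreconnected S)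
    {L L' : X → ℂ} (hL : ContinuousOn L S) (hL' : ContinuousOn L' S)
    (h : ∀ x ∈ S, Complex.exp (L x) = Complex.exp (L' x)) {x y : X} (hx : x ∈ S) (hy : y ∈ S) :
    L x - L' x = L y - L' y := by
  have hsub : (fun x => L x - L' x) '' S ⊆ Set.range (fun n : ℤ => (n : ℂ) * (2 * Real.pi * Complex.I)) := by
    rintro _ ⟨x, hx, rfl⟩
    obtain ⟨n, hn⟩ := Complex.exp_eq_exp_iff_exists_int.1 (h x hx)
    exact ⟨n, by simp [hn]⟩
  have hpre : IsPreconnected ((fun x => L x - L' x) '' S) := hS.image _ (hL.sub hL')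
  have hc : (Set.range (fun n : ℤ => (n : ℂ) * (2 * Real.pi * Complex.I))).Countable :=
    Set.countable_range _
  have := (hc.mono hsub).isTotallyDisconnected  _ subset_rfl hpre
  exact this ⟨x, hx, rfl⟩ ⟨y, hy, rfl⟩

lemma one_add_slit {w : ℂ} (h : ‖w‖ < 1) : 0 < (1 + w).re := by
  have := Complex.abs_re_le_norm w
  have := abs_lt.1 (this.trans_lt h)
  simp; linarith

lemma LogOnSet.near {γ : Set ℂ} {q q' : ℂ} (h : LogOnSet γ q)
    (hd : ∀ z ∈ γ, ‖q - q'‖ < ‖z - q‖) : LogOnSet γ q' := by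
  obtain ⟨L, hL, hexp⟩ := h
  have hne : ∀ z ∈ γ, z - q ≠ 0 := fun z hz => norm_pos_iff.1 ((norm_nonneg _).trans_lt (hd z hz))
  have hsl : ∀ z ∈ γ, 0 < (1 + (q - q') / (z - q)).re := fun z hz => by
    apply one_add_slit
    rw [norm_div]
    exact (div_lt_one (norm_pos_iff.2 (hne z hz))).2 (hd z hz)
  refine ⟨fun z => L z + Complex.log (1 + (q - q') / (z - q)), hL.add ?_, ?_⟩
  · apply ContinuousOn.clog
    · exact continuousOn_const.add (continuousOn_const.div (by fun_prop) hne)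
    · intro z hz; exact Or.inl (hsl z hz)
  · intro z hz
    have h0 : (1 + (q - q') / (z - q)) ≠ 0 := fun h => by
      have := hsl z hz; rw [h] at this; simp at this
    rw [Complex.exp_add, hexp z hz, Complex.exp_log h0]
    field_simp [hne z hz]
    ring

lemma LogOnSet.far {γ : Set ℂ} {q : ℂ} (hd : ∀ z ∈ γ, ‖z‖ < ‖q‖) : LogOnSet γ q := by
  by_cases hq : q = 0
  · subst hq
    refine ⟨fun _ => 0, continuousOn_const, fun z hz => ?_⟩
    have := hd z hz
    simp at this
    exact absurd this (not_lt.2 (norm_nonneg _))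
  have hsl : ∀ z ∈ γ, 0 < (1 + (- z / q)).re := fun z hz => by
    apply one_add_slit
    rw [norm_div, norm_neg]
    exact (div_lt_one (norm_pos_iff.2 hq)).2 (hd z hz)
  refine ⟨fun z => Complex.log (-q) + Complex.log (1 + (-z / q)), continuousOn_const.add ?_, ?_⟩
  · apply ContinuousOn.clog (by fun_prop)
    intro z hz; exact Or.inl (hsl z hz)
  · intro z hz
    have h0 : (1 + (-z / q)) ≠ 0 := fun h => by
      have := hsl z hz; rw [h] at this; simp at this
    rw [Complex.exp_add, Complex.exp_log (neg_ne_zero.2 hq), Complex.exp_log h0]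
    field_simp
    ring

/-- Extremal argument: points of the nodal set off `γ` at a height different from that of
`γ ∩ {u = 0}` have winding number zero. -/
lemma logOn_of_nodal {f : ℂ → ℂ} (hf : AnalyticOnNhd ℂ f (ball 0 1))
    (hnc : ∃ z ∈ ball (0 : ℂ) 1, deriv f z ≠ 0) {γ : Set ℂ} (hγ : IsCompact γ)
    (hγb : γ ⊆ ball 0 1) {t τ : ℝ} (hτ : τ ≠ 0)
    (hz : ∀ z ∈ γ, (f z).re = 0 → (f z).im = t)
    {q : ℂ} (hq : q ∈ ball (0 : ℂ) 1) (hq0 : (f q).re = 0) (hq1 : 0 < τ * ((f q).im - t)) :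
    LogOnSet γ q := by
  by_contra hcon
  obtain ⟨r, hr1, hr⟩ : ∃ r < 1, γ ⊆ ball 0 r := by
    rcases γ.eq_empty_or_nonempty with h | hne
    · exact ⟨0, by norm_num, by simp [h]⟩
    · obtain ⟨x, hx, hmax⟩ := hγ.exists_isMaxOn hne (continuous_norm.continuousOn)
      have := hγb hx
      simp at this
      refine ⟨(‖x‖ + 1) / 2, by linarith, fun y hy => ?_⟩
      have := hmax hy
      simp at this ⊢
      linarith
  set V : Set ℂ := {p | p ∉ γ ∧ ¬ LogOnSet γ p} with hV
  have hdist : ∀ p ∉ γ, ∃ δ > 0, ∀ z ∈ γ, δ ≤ ‖z - p‖ := fun p hp => by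
    obtain ⟨δ, hδ, h⟩ := Metric.isOpen_iff.1 hγ.isClosed.isOpen_compl p hp
    refine ⟨δ, hδ, fun z hz => ?_⟩
    by_contra hlt
    exact h (by rw [mem_ball, dist_eq_norm]; exact not_le.1 hlt) hz
  have key : ∀ p ∉ γ, ∃ δ > 0, ∀ p' ∈ ball p δ, p' ∉ γ ∧ (LogOnSet γ p ↔ LogOnSet γ p') := by
    intro p hp
    obtain ⟨δ, hδ, h⟩ := hdist p hp
    refine ⟨δ / 2, by positivity, fun p' hp' => ?_⟩
    rw [mem_ball, dist_eq_norm] at hp'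
    have h2 : ∀ z ∈ γ, δ / 2 ≤ ‖z - p'‖ := fun z hz => by
      have h1 := h z hz
      have : ‖z - p‖ ≤ ‖z - p'‖ + ‖p' - p‖ := by
        simpa using norm_add_le (z - p') (p' - p)
      linarith
    refine ⟨fun hmem => ?_, fun hl => hl.near fun z hz => ?_, fun hl => hl.near fun z hz => ?_⟩
    · have := h2 p' hmem
      simp at this; linarith
    · rw [norm_sub_rev]; linarith [h z hz]
    · linarith [h2 z hz]
  have hVo : IsOpen V := by
    rw [Metric.isOpen_iff]
    rintro p ⟨hp, hl⟩
    obtain ⟨δ, hδ, h⟩ := key p hp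
    exact ⟨δ, hδ, fun p' hp' => ⟨(h p' hp').1, fun h' => hl ((h p' hp').2.2 h')⟩⟩
  have hWo : IsClosed (V ∪ γ) := by
    rw [← isOpen_compl_iff, Metric.isOpen_iff]
    intro p hp
    simp only [Set.mem_compl_iff, Set.mem_union, not_or] at hp
    obtain ⟨δ, hδ, h⟩ := key p hp.2
    refine ⟨δ, hδ, fun p' hp' => ?_⟩
    simp only [Set.mem_compl_iff, Set.mem_union, not_or]
    refine ⟨fun h' => ?_, (h p' hp').1⟩
    have : LogOnSet γ p := by
      by_contra hh; exact hp.1 ⟨hp.2, hh⟩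
    exact h'.2 ((h p' hp').2.1 this)
  have hVb : V ∪ γ ⊆ ball 0 r := by
    rintro p (hp | hp)
    · by_contra hh
      apply hp.2
      apply LogOnSet.far
      intro z hz
      have := hr hz
      simp at this hh
      linarith
    · exact hr hp
  have hVb1 : V ∪ γ ⊆ ball 0 1 := hVb.trans (ball_subset_ball hr1.le)
  have hcomp : IsCompact (V ∪ γ) :=
    (isCompact_closedBall (0:ℂ) r).of_isClosed_subset hWo (hVb.trans ball_subset_closedBall)
  have hfc : ContinuousOn f (V ∪ γ) := hf.continuousOn.mono hVb1
  set K : Set ℂ := (V ∪ γ) ∩ f ⁻¹' {w | w.re = 0 ∧ τ * ((f q).im - t) ≤ τ * (w.im - t)} with hK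
  have hKc : IsCompact K := by
    apply hcomp.of_isClosed_subset _ Set.inter_subset_left
    apply hfc.preimage_isClosed_of_isClosed hWo
    apply IsClosed.inter
    · exact isClosed_eq Complex.continuous_re continuous_const
    · exact isClosed_le (f := fun _ : ℂ => τ * ((f q).im - t)) (g := fun w : ℂ => τ * (w.im - t))
        continuous_const (by fun_prop)
  have hqγ : q ∉ γ := fun h => by
    have := hz q h hq0
    rw [this] at hq1; simp at hq1
  have hqK : q ∈ K := ⟨Or.inl ⟨hqγ, hcon⟩, hq0, le_rfl⟩
  obtain ⟨a, haK, hmax⟩ := hKc.exists_isMaxOn ⟨q, hqK⟩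
    (f := fun z => τ * ((f z).im - t)) (by
      have := hfc.mono (Set.inter_subset_left : K ⊆ _)
      fun_prop)
  have haγ : a ∉ γ := fun h => by
    have h1 := hz a h haK.2.1
    have h2 := haK.2.2
    rw [h1] at h2; simp at h2; linarith
  have haV : a ∈ V := haK.1.resolve_right haγ
  have hab : a ∈ ball (0:ℂ) 1 := hVb1 haK.1
  rcases (hf a hab).eventually_constant_or_nhds_le_map_nhds with h | h
  · have heq := hf.eqOn_of_preconnected_of_eventuallyEq (g := fun _ => f a) analyticOnNhd_const
      (convex_ball (0:ℂ) 1).isPreconnected hab h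
    obtain ⟨z, hzb, hz'⟩ := hnc
    apply hz'
    have : f =ᶠ[nhds z] fun _ => f a := by
      filter_upwards [isOpen_ball.mem_nhds hzb] with y hy using heq hy
    rw [this.deriv_eq]; simp
  · have h1 : f '' V ∈ nhds (f a) := h (image_mem_map (hVo.mem_nhds haV))
    have h2 : Tendsto (fun x : ℝ => f a + (τ * x : ℝ) * Complex.I) (nhdsWithin 0 (Set.Ioi 0)) (nhds (f a)) := by
      have : Continuous (fun x : ℝ => f a + (τ * x : ℝ) * Complex.I) := by fun_prop
      have h3 := this.tendsto 0
      simp only [mul_zero, Complex.ofReal_zero, zero_mul, add_zero] at h3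
      exact h3.mono_left nhdsWithin_le_nhds
    obtain ⟨x, ⟨b, hb, hfb⟩, hx⟩ := ((h2.eventually h1).and self_mem_nhdsWithin).exists
    have hx : 0 < x := hx
    have hre : (f b).re = 0 := by rw [hfb]; simp [haK.2.1]
    have him : (f b).im = (f a).im + τ * x := by rw [hfb]; simp
    have hpos : 0 < τ * τ := mul_self_pos.2 hτ
    have hbig : τ * ((f a).im - t) < τ * ((f b).im - t) := by
      rw [him]; nlinarith
    have hbK : b ∈ K := ⟨Or.inl hb, hre, haK.2.2.trans hbig.le⟩
    exact absurd (hmax hbK) (not_le.2 hbig)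

/-- The winding number jumps across a simple crossing. -/
lemma crossing_not_both {γ' : Set ℂ} (hγ' : IsPreconnected γ') {z₁ d : ℂ} (hd : d ≠ 0)
    {s ε x₁ x₂ ρ : ℝ} (hε : 0 < ε) (hs : ε < s)
    (hx₁ : |x₁| ≤ ε) (hx₂ : |x₂| ≤ ε)
    (he₁ : z₁ + s * d ∈ γ') (he₂ : z₁ + (-s : ℝ) * d ∈ γ')
    (hρ : ∀ z ∈ γ', ρ < ‖z - z₁‖) (hερ : 4 * (2 * ε * ‖d‖) ≤ ρ)
    (h₁ : LogOnSet (γ' ∪ (fun x : ℝ => z₁ + x * d) '' Set.Icc (-s) s) (z₁ + (x₁ + ε * Complex.I) * d))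
    (h₂ : LogOnSet (γ' ∪ (fun x : ℝ => z₁ + x * d) '' Set.Icc (-s) s) (z₁ + (x₂ - ε * Complex.I) * d)) :
    False := by
  obtain ⟨L₁, hL₁, hexp₁⟩ := h₁
  obtain ⟨L₂, hL₂, hexp₂⟩ := h₂
  set γ := γ' ∪ (fun x : ℝ => z₁ + x * d) '' Set.Icc (-s) s with hγ
  set a₁ := z₁ + (x₁ + ε * Complex.I) * d with ha₁
  set a₂ := z₁ + (x₂ - ε * Complex.I) * d with ha₂
  have hn₁ : ‖a₁ - z₁‖ ≤ 2 * ε * ‖d‖ := by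
    rw [ha₁, add_sub_cancel_left, norm_mul]
    gcongr
    calc ‖(x₁ : ℂ) + ε * Complex.I‖ ≤ ‖(x₁ : ℂ)‖ + ‖(ε : ℂ) * Complex.I‖ := norm_add_le _ _
      _ ≤ ε + ε := by
        gcongr
        · simpa using hx₁
        · simp [abs_of_pos hε]
      _ = 2 * ε := by ring
  have hn₂ : ‖a₂ - z₁‖ ≤ 2 * ε * ‖d‖ := by
    rw [ha₂, add_sub_cancel_left, norm_mul]
    gcongr
    calc ‖(x₂ : ℂ) - ε * Complex.I‖ ≤ ‖(x₂ : ℂ)‖ + ‖(ε : ℂ) * Complex.I‖ := norm_sub_le _ _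
      _ ≤ ε + ε := by
        gcongr
        · simpa using hx₂
        · simp [abs_of_pos hε]
      _ = 2 * ε := by ring
  have hdpos : 0 < ‖d‖ := norm_pos_iff.2 hd
  have hρ0 : 0 < ρ := lt_of_lt_of_le (by positivity) hερ
  have hfar : ∀ z ∈ γ', ‖a₂ - a₁‖ < ‖z - a₂‖ := by
    intro z hz
    have h1 := hρ z hz
    have h2 : ‖a₂ - a₁‖ ≤ ‖a₂ - z₁‖ + ‖a₁ - z₁‖ := by
      rw [norm_sub_rev a₁ z₁]; simpa using norm_add_le (a₂ - z₁) (z₁ - a₁)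
    have h3 : ‖z - z₁‖ ≤ ‖z - a₂‖ + ‖a₂ - z₁‖ := by
      simpa using norm_add_le (z - a₂) (a₂ - z₁)
    linarith
  have hne : ∀ z ∈ γ', z - a₂ ≠ 0 := fun z hz =>
    norm_pos_iff.1 ((norm_nonneg _).trans_lt (hfar z hz))
  set h : ℂ → ℂ := fun z => 1 + (a₂ - a₁) / (z - a₂) with hh
  have hre : ∀ z ∈ γ', 0 < (h z).re := fun z hz => by
    apply one_add_slit
    rw [norm_div]
    exact (div_lt_one (norm_pos_iff.2 (hne z hz))).2 (hfar z hz)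
  have hh0 : ∀ z ∈ γ', h z ≠ 0 := fun z hz h0 => by
    have := hre z hz; rw [h0] at this; simp at this
  have hheq : ∀ z ∈ γ', h z = (z - a₁) / (z - a₂) := fun z hz => by
    have := hne z hz
    simp only [hh]; field_simp; ring
  have hcL0 : ContinuousOn (fun z => Complex.log (h z)) γ' := by
    apply ContinuousOn.clog
    · exact continuousOn_const.add (continuousOn_const.div (by fun_prop) hne)
    · intro z hz; exact Or.inl (hre z hz)
  have c1 := log_branch_const hγ' ((hL₁.sub hL₂).mono Set.subset_union_left) hcL0 (by
    intro z hz
    have hz' : z ∈ γ := Or.inl hz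
    rw [Pi.sub_apply, Complex.exp_sub, hexp₁ z hz', hexp₂ z hz', Complex.exp_log (hh0 z hz), hheq z hz]) he₁ he₂
  set ℓ : ℝ → ℂ := fun x => Complex.log ((x - x₁ : ℝ) - ε * Complex.I)
    - Complex.log ((x - x₂ : ℝ) + ε * Complex.I) with hℓ
  have hsl1 : ∀ x : ℝ, ((x - x₁ : ℝ) - ε * Complex.I : ℂ) ∈ Complex.slitPlane := fun x => by
    right; simp [hε.ne']
  have hsl2 : ∀ x : ℝ, ((x - x₂ : ℝ) + ε * Complex.I : ℂ) ∈ Complex.slitPlane := fun x => by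
    right; simp [hε.ne']
  have hcℓ : Continuous ℓ := by
    apply Continuous.sub
    · exact Continuous.clog (by fun_prop) hsl1
    · exact Continuous.clog (by fun_prop) hsl2
  have hmapsto : Set.MapsTo (fun x : ℝ => z₁ + x * d) (Set.Icc (-s) s) γ :=
    fun x hx => Or.inr ⟨x, hx, rfl⟩
  have hexpℓ : ∀ x ∈ Set.Icc (-s) s, Complex.exp (ℓ x)
      = (z₁ + x * d - a₁) / (z₁ + x * d - a₂) := by
    intro x hx
    rw [hℓ]
    simp only
    rw [Complex.exp_sub, Complex.exp_log (Complex.slitPlane_ne_zero (hsl1 x)),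
      Complex.exp_log (Complex.slitPlane_ne_zero (hsl2 x)), ← mul_div_mul_right _ _ hd, ha₁, ha₂]
    push_cast
    congr 1 <;> ring
  have c2 := log_branch_const (S := Set.Icc (-s) s) isPreconnected_Icc
    (L := fun x : ℝ => L₁ (z₁ + x * d) - L₂ (z₁ + x * d)) (L' := ℓ)
    ((hL₁.sub hL₂).comp (by fun_prop) hmapsto) hcℓ.continuousOn (by
      intro x hx
      rw [hexpℓ x hx, Complex.exp_sub, hexp₁ _ (hmapsto hx), hexp₂ _ (hmapsto hx)])
    (x := s) (y := -s) ⟨by linarith, le_rfl⟩ ⟨le_rfl, by linarith⟩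
  simp only [Pi.sub_apply] at c1 c2
  have c3 : ℓ s - Complex.log (h (z₁ + s * d)) = ℓ (-s) - Complex.log (h (z₁ + (-s : ℝ) * d)) := by
    linear_combination c1 - c2
  have him1 : (ℓ s).im = ((s - x₁ : ℝ) - ε * Complex.I : ℂ).arg - ((s - x₂ : ℝ) + ε * Complex.I : ℂ).arg := by
    simp [hℓ, Complex.log_im]
  have him2 : (ℓ (-s)).im = ((-s - x₁ : ℝ) - ε * Complex.I : ℂ).arg - ((-s - x₂ : ℝ) + ε * Complex.I : ℂ).arg := by
    simp [hℓ, Complex.log_im]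
  have hx₁' := abs_le.1 hx₁
  have hx₂' := abs_le.1 hx₂
  have A1 : -(Real.pi/2) < ((s - x₁ : ℝ) - ε * Complex.I : ℂ).arg :=
    (abs_lt.1 (Complex.abs_arg_lt_pi_div_two_iff.2 (Or.inl (by simp; linarith)))).1
  have A1' : ((s - x₁ : ℝ) - ε * Complex.I : ℂ).arg < 0 :=
    Complex.arg_neg_iff.2 (by simp [hε])
  have A2 : ((s - x₂ : ℝ) + ε * Complex.I : ℂ).arg < Real.pi/2 :=
    (abs_lt.1 (Complex.abs_arg_lt_pi_div_two_iff.2 (Or.inl (by simp; linarith)))).2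
  have A2' : 0 ≤ ((s - x₂ : ℝ) + ε * Complex.I : ℂ).arg :=
    Complex.arg_nonneg_iff.2 (by simp [hε.le])
  have A3 : ((-s - x₁ : ℝ) - ε * Complex.I : ℂ).arg < - (Real.pi/2) := by
    have hneg : ((-s - x₁ : ℝ) - ε * Complex.I : ℂ).arg < 0 := Complex.arg_neg_iff.2 (by simp [hε])
    have := mt Complex.abs_arg_le_pi_div_two_iff.1 (show ¬ (0 ≤ ((-s - x₁ : ℝ) - ε * Complex.I : ℂ).re) by
      simp; linarith)
    rw [abs_of_neg hneg] at this
    linarith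
  have A4 : Real.pi/2 < ((-s - x₂ : ℝ) + ε * Complex.I : ℂ).arg := by
    have hneg : 0 ≤ ((-s - x₂ : ℝ) + ε * Complex.I : ℂ).arg := Complex.arg_nonneg_iff.2 (by simp [hε.le])
    have := mt Complex.abs_arg_le_pi_div_two_iff.1 (show ¬ (0 ≤ ((-s - x₂ : ℝ) + ε * Complex.I : ℂ).re) by
      simp; linarith)
    rw [abs_of_nonneg hneg] at this
    linarith
  have B1 := abs_lt.1 (Complex.abs_arg_lt_pi_div_two_iff.2 (Or.inl (hre _ he₁)))
  have B2 := abs_lt.1 (Complex.abs_arg_lt_pi_div_two_iff.2 (Or.inl (hre _ he₂)))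
  obtain ⟨n, hn⟩ : ∃ n : ℤ, ℓ s = Complex.log (h (z₁ + s * d)) + n * (2 * Real.pi * Complex.I) := by
    apply Complex.exp_eq_exp_iff_exists_int.1
    rw [Complex.exp_log (hh0 _ he₁), hheq _ he₁, hexpℓ s ⟨by linarith, le_rfl⟩]
  have hn' := congrArg Complex.im hn
  have c3' := congrArg Complex.im c3
  simp only [Complex.add_im, Complex.sub_im, Complex.log_im] at hn' c3'
  have hnim : ((n : ℂ) * (2 * Real.pi * Complex.I)).im = n * (2 * Real.pi) := by
    simp
  rw [hnim] at hn'
  have hpi := Real.pi_pos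
  have hnlt : (n : ℝ) < 1 := by
    by_contra hc
    push Not at hc
    nlinarith
  have hngt : (-1 : ℝ) < n := by
    by_contra hc
    push Not at hc
    nlinarith
  have : n = 0 := by
    have h1 : n < 1 := by exact_mod_cast hnlt
    have h2 : -1 < n := by exact_mod_cast hngt
    omega
  subst this
  simp at hn'
  linarith

lemma simple_zero_approx {f : ℂ → ℂ} (hf : AnalyticOnNhd ℂ f (ball 0 1)) {z₁ : ℂ} {t : ℝ}
    (hz : z₁ ∈ ball (0:ℂ) 1) (ht : f z₁ = t * Complex.I) (hd : deriv f z₁ ≠ 0) :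
    ∃ δ > 0, ∀ w : ℂ, ‖w‖ < δ → z₁ + w * (deriv f z₁)⁻¹ ∈ ball (0:ℂ) 1 ∧
      ‖f (z₁ + w * (deriv f z₁)⁻¹) - t * Complex.I - w‖ ≤ ‖w‖ / 4 := by
  have h1 : HasDerivAt f (deriv f z₁) z₁ := (hf z₁ hz).differentiableAt.hasDerivAt
  set d := (deriv f z₁)⁻¹ with hdd
  have h2 : HasDerivAt (fun w : ℂ => f (z₁ + w * d)) 1 0 := by
    have h3 : HasDerivAt (fun w : ℂ => z₁ + w * d) d 0 := by
      simpa using ((hasDerivAt_id (0:ℂ)).mul_const d).const_add z₁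
    have h4 : HasDerivAt f (deriv f z₁) (z₁ + 0 * d) := by simpa using h1
    have := HasDerivAt.comp (0:ℂ) h4 h3
    rwa [hdd, mul_inv_cancel₀ hd] at this
  have h5 := (hasDerivAt_iff_isLittleO_nhds_zero.1 h2).def (by norm_num : (0:ℝ) < 1/4)
  have h6 : ∀ᶠ w : ℂ in nhds 0, z₁ + w * d ∈ ball (0:ℂ) 1 := by
    have hc : Continuous (fun w : ℂ => z₁ + w * d) := by fun_prop
    refine hc.continuousAt.eventually_mem (isOpen_ball.mem_nhds ?_)
    simpa using hz
  obtain ⟨δ, hδ, h7⟩ := Metric.eventually_nhds_iff.1 (h5.and h6)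
  refine ⟨δ, hδ, fun w hw => ?_⟩
  obtain ⟨h8, h9⟩ := h7 (y := w) (by simpa using hw)
  refine ⟨h9, ?_⟩
  simp [ht] at h8
  linarith

lemma simple_zero_signs {f : ℂ → ℂ} (hf : AnalyticOnNhd ℂ f (ball 0 1)) {z₁ : ℂ} {t : ℝ}
    (hz : z₁ ∈ ball (0:ℂ) 1) (ht : f z₁ = t * Complex.I) (hd : deriv f z₁ ≠ 0) :
    ∃ s : ℝ, 0 < s ∧ ∀ x : ℝ, x ≠ 0 → |x| ≤ s →
      z₁ + x * (deriv f z₁)⁻¹ ∈ ball (0:ℂ) 1 ∧ (f (z₁ + x * (deriv f z₁)⁻¹)).re ≠ 0 := by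
  obtain ⟨δ, hδ, h⟩ := simple_zero_approx hf hz ht hd
  refine ⟨δ / 2, by positivity, fun x hx0 hx => ?_⟩
  obtain ⟨h1, h2⟩ := h x (by simp; linarith)
  refine ⟨h1, fun h3 => ?_⟩
  have h4 := (Complex.abs_re_le_norm _).trans h2
  simp [h3] at h4
  have := abs_pos.2 hx0
  linarith

theorem no_double {f : ℂ → ℂ} (hf : AnalyticOnNhd ℂ f (ball 0 1)) {z₁ z₂ : ℂ} {t s₁ s₂ : ℝ}
    (hz₁ : z₁ ∈ ball (0:ℂ) 1) (hne : z₁ ≠ z₂)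
    (hz₂ : z₂ ∈ ball (0:ℂ) 1)
    (ht₁ : f z₁ = t * Complex.I) (hd₁ : deriv f z₁ ≠ 0)
    (ht₂ : f z₂ = t * Complex.I) 
    (hs₁ : 0 < s₁) (hs₂ : 0 < s₂)
    (h₁ : ∀ x : ℝ, x ≠ 0 → |x| ≤ s₁ →
      z₁ + x * (deriv f z₁)⁻¹ ∈ ball (0:ℂ) 1 ∧ (f (z₁ + x * (deriv f z₁)⁻¹)).re ≠ 0)
    (h₂ : ∀ x : ℝ, x ≠ 0 → |x| ≤ s₂ →
      z₂ + x * (deriv f z₂)⁻¹ ∈ ball (0:ℂ) 1 ∧ (f (z₂ + x * (deriv f z₂)⁻¹)).re ≠ 0)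
    (hP : JoinedIn {z | z ∈ ball (0:ℂ) 1 ∧ (f z).re ≠ 0} (z₁ + s₁ * (deriv f z₁)⁻¹)
      (z₂ + s₂ * (deriv f z₂)⁻¹))
    (hN : JoinedIn {z | z ∈ ball (0:ℂ) 1 ∧ (f z).re ≠ 0} (z₁ + (-s₁ : ℝ) * (deriv f z₁)⁻¹)
      (z₂ + (-s₂ : ℝ) * (deriv f z₂)⁻¹)) : False := by
  obtain ⟨δ, hδ, hap⟩ := simple_zero_approx hf hz₁ ht₁ hd₁
  set d₁ := (deriv f z₁)⁻¹ with hdd₁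
  set d₂ := (deriv f z₂)⁻¹ with hdd₂
  have hd1 : d₁ ≠ 0 := inv_ne_zero hd₁
  obtain ⟨P, hPm⟩ := hP
  obtain ⟨N, hNm⟩ := hN
  set g₁ : ℝ → ℂ := fun x => z₁ + x * d₁ with hg₁
  set g₂ : ℝ → ℂ := fun x => z₂ + x * d₂ with hg₂
  have hg₁c : Continuous g₁ := by rw [hg₁]; fun_prop
  have hg₂c : Continuous g₂ := by rw [hg₂]; fun_prop
  set σ₂ := g₂ '' Set.Icc (-s₂) s₂ with hσ₂
  set γ' := (Set.range P ∪ σ₂) ∪ Set.range N with hγ'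
  have hcomp : IsCompact γ' :=
    ((isCompact_range P.continuous).union (isCompact_Icc.image hg₂c)).union
      (isCompact_range N.continuous)
  have hp1 : g₂ s₂ ∈ σ₂ := ⟨s₂, ⟨by linarith, le_refl _⟩, rfl⟩
  have hp2 : g₂ (-s₂) ∈ σ₂ := ⟨-s₂, ⟨le_refl _, by linarith⟩, rfl⟩
  have hpre : IsPreconnected γ' := by
    refine IsPreconnected.union (g₂ (-s₂)) (Or.inr hp2) ⟨1, by simp [hg₂]⟩ ?_
      (isPreconnected_range N.continuous)
    exact IsPreconnected.union (g₂ s₂) ⟨1, by simp [hg₂]⟩ hp1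
      (isPreconnected_range P.continuous) (isPreconnected_Icc.image _ hg₂c.continuousOn)
  have hin : ∀ z ∈ γ', z ∈ ball (0:ℂ) 1 ∧ (z = z₂ ∨ (f z).re ≠ 0) := by
    rintro z ((⟨x, rfl⟩ | ⟨x, hx, rfl⟩) | ⟨x, rfl⟩)
    · exact ⟨(hPm x).1, Or.inr (hPm x).2⟩
    · by_cases hx0 : x = 0
      · subst hx0; simpa [hg₂] using hz₂
      · have := h₂ x hx0 (abs_le.2 hx)
        exact ⟨this.1, Or.inr this.2⟩
    · exact ⟨(hNm x).1, Or.inr (hNm x).2⟩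
  have hz1 : z₁ ∉ γ' := by
    intro h
    rcases (hin _ h).2 with h | h
    · exact hne h
    · simp [ht₁] at h
  obtain ⟨ρ, hρ, hρm⟩ := Metric.isOpen_iff.1 hcomp.isClosed.isOpen_compl z₁ hz1
  set γ := γ' ∪ g₁ '' Set.Icc (-s₁) s₁ with hγ
  have hγc : IsCompact γ := hcomp.union (isCompact_Icc.image hg₁c)
  have hin' : ∀ z ∈ γ, z ∈ ball (0:ℂ) 1 ∧ (z = z₁ ∨ z = z₂ ∨ (f z).re ≠ 0) := by
    rintro z (h | ⟨x, hx, rfl⟩)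
    · exact ⟨(hin z h).1, Or.inr (hin z h).2⟩
    · by_cases hx0 : x = 0
      · subst hx0; simpa [hg₁] using hz₁
      · have := h₁ x hx0 (abs_le.2 hx)
        exact ⟨this.1, Or.inr (Or.inr this.2)⟩
  have hzt : ∀ z ∈ γ, (f z).re = 0 → (f z).im = t := by
    intro z hz h0
    rcases (hin' z hz).2 with rfl | rfl | h
    · simp [ht₁]
    · simp [ht₂]
    · exact absurd h0 h
  have hdpos : 0 < ‖d₁‖ := norm_pos_iff.2 hd1
  obtain ⟨ε, hε, hεδ, hεs, hερ⟩ : ∃ ε : ℝ, 0 < ε ∧ 2 * ε < δ ∧ ε < s₁ ∧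
      4 * (2 * ε * ‖d₁‖) ≤ ρ / 2 := by
    refine ⟨min (δ / 4) (min (s₁ / 2) (ρ / (16 * ‖d₁‖))), by positivity, ?_, ?_, ?_⟩
    · have := min_le_left (δ / 4) (min (s₁ / 2) (ρ / (16 * ‖d₁‖))); linarith
    · have := (min_le_right (δ / 4) (min (s₁ / 2) (ρ / (16 * ‖d₁‖)))).trans (min_le_left _ _)
      linarith
    · have := (min_le_right (δ / 4) (min (s₁ / 2) (ρ / (16 * ‖d₁‖)))).trans (min_le_right _ _)
      rw [le_div_iff₀ (by positivity)] at this
      linarith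
  have key : ∀ τ : ℝ, |τ| = 1 → ∃ x : ℝ, |x| ≤ ε ∧
      LogOnSet γ (z₁ + (x + (τ * ε : ℝ) * Complex.I) * d₁) := by
    intro τ hτ
    have hw : ∀ x : ℝ, |x| ≤ ε → ‖(x + (τ * ε : ℝ) * Complex.I : ℂ)‖ ≤ 2 * ε := by
      intro x hx
      refine (norm_add_le _ _).trans ?_
      simp only [norm_mul, Complex.norm_real, Real.norm_eq_abs, abs_mul, hτ, Complex.norm_I,
        abs_of_pos hε]
      linarith
    have hest : ∀ x : ℝ, |x| ≤ ε → z₁ + (x + (τ * ε : ℝ) * Complex.I) * d₁ ∈ ball (0:ℂ) 1 ∧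
        |(f (z₁ + (x + (τ * ε : ℝ) * Complex.I) * d₁)).re - x| ≤ ε / 2 ∧
        |(f (z₁ + (x + (τ * ε : ℝ) * Complex.I) * d₁)).im - t - τ * ε| ≤ ε / 2 := by
      intro x hx
      have h := hap _ ((hw x hx).trans_lt hεδ)
      have hb := h.2.trans (by linarith [hw x hx] : _ ≤ ε / 2)
      refine ⟨h.1, ?_, ?_⟩
      · have := (Complex.abs_re_le_norm _).trans hb
        simpa using this
      · have := (Complex.abs_im_le_norm _).trans hb
        simpa using this
    have hcont : ContinuousOn (fun x : ℝ => (f (z₁ + (x + (τ * ε : ℝ) * Complex.I) * d₁)).re)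
        (Set.Icc (-ε) ε) := by
      refine Complex.continuous_re.comp_continuousOn (hf.continuousOn.comp (by fun_prop) ?_)
      intro x hx
      exact (hest x (abs_le.2 hx)).1
    have h0 := intermediate_value_Icc (by linarith : -ε ≤ ε) hcont
    obtain ⟨x, hx, hx0⟩ := h0 (show (0:ℝ) ∈ _ by
      have ha := (abs_le.1 (hest (-ε) (by simp [abs_of_pos hε])).2.1)
      have hb := (abs_le.1 (hest ε (by simp [abs_of_pos hε])).2.1)
      constructor
      · linarith
      · linarith)
    have hxe := abs_le.2 hx
    refine ⟨x, hxe, logOn_of_nodal hf ⟨z₁, hz₁, hd₁⟩ hγc (fun z hz => (hin' z hz).1)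
      (t := t) (τ := τ) (by rintro rfl; simp at hτ) hzt (hest x hxe).1 hx0 ?_⟩
    have h3 := abs_le.1 (hest x hxe).2.2
    have : τ = 1 ∨ τ = -1 := by
      rcases abs_cases τ with h | h <;> [left; right] <;> linarith
    rcases this with rfl | rfl <;> linarith
  obtain ⟨x₁, hx₁, hl₁⟩ := key 1 (by simp)
  obtain ⟨x₂, hx₂, hl₂⟩ := key (-1) (by simp)
  refine crossing_not_both (γ' := γ') (z₁ := z₁) hpre hd1 hε hεs hx₁ hx₂ (ρ := ρ / 2)
    (Or.inl (Or.inl ⟨0, by simp⟩)) (Or.inr ⟨0, by simp⟩) ?_ hερ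
    (by simpa using hl₁) (by simpa [sub_eq_add_neg] using hl₂)
  intro z hz
  by_contra hc
  exact hρm (show z ∈ ball z₁ ρ by rw [mem_ball, dist_eq_norm]; linarith) hz

lemma countable_zeros {g : ℂ → ℂ} {r : ℝ} (hg : AnalyticOnNhd ℂ g (ball 0 r))
    (h : ∃ z ∈ ball (0:ℂ) r, g z ≠ 0) : {z | z ∈ ball (0:ℂ) r ∧ g z = 0}.Countable := by
  obtain ⟨x, hx, hgx⟩ := h
  have h1 := hg.preimage_zero_mem_codiscreteWithin hgx hx
    ⟨⟨x, hx⟩, (convex_ball (0:ℂ) r).isPreconnected⟩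
  have h2 := isDiscrete_of_codiscreteWithin (s := g ⁻¹' {0}) (by simpa using h1)
  have h3 := h2.to_subtype
  have h4 : Countable ↥(g ⁻¹' {0} ∩ ball 0 r) := TopologicalSpace.separableSpace_iff_countable.1 inferInstance
  refine Set.Countable.mono ?_ (Set.countable_coe_iff.1 h4)
  rintro z ⟨hz, h0⟩
  exact ⟨h0, hz⟩

lemma joined_of_component {U : Set ℂ} (hU : IsOpen U) {x y : ℂ} (hx : x ∈ U) (hy : y ∈ U)
    (h : connectedComponentIn U x = connectedComponentIn U y) : JoinedIn U x y := by
  have h1 : IsOpen (connectedComponentIn U x) := hU.connectedComponentIn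
  have h2 : IsConnected (connectedComponentIn U x) := isConnected_connectedComponentIn_iff.2 hx
  have h3 := h1.isConnected_iff_isPathConnected.1 h2
  refine (h3.joinedIn x (mem_connectedComponentIn hx) y ?_).mono (connectedComponentIn_subset _ _)
  rw [h]; exact mem_connectedComponentIn hy

theorem count_zeros {f : ℂ → ℂ} (hf : AnalyticOnNhd ℂ f (ball 0 1)) {k : ℕ}
    (hne : ∃ z ∈ ball (0:ℂ) 1, (f z).re ≠ 0)
    (hfin : (nodalComponents {z | z ∈ ball (0:ℂ) 1 ∧ (f z).re ≠ 0}).Finite)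
    (hcard : (nodalComponents {z | z ∈ ball (0:ℂ) 1 ∧ (f z).re ≠ 0}).ncard ≤ k) :
    ∃ S : Set ℝ, S.Countable ∧ ∀ t ∉ S, ∃ A : Finset ℂ, A.card ≤ k * k ∧
      ∀ z ∈ ball (0:ℂ) 1, f z = t * Complex.I → z ∈ A ∧ deriv f z ≠ 0 := by
  set U := {z | z ∈ ball (0:ℂ) 1 ∧ (f z).re ≠ 0} with hUdef
  have hUo : IsOpen U := by
    have := hf.continuousOn.isOpen_inter_preimage isOpen_ball
      (isOpen_ne_fun Complex.continuous_re (continuous_const (y := (0:ℝ))))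
    exact this
  by_cases hder : ∃ z ∈ ball (0:ℂ) 1, deriv f z ≠ 0
  · refine ⟨(fun z => (f z).im) '' {z | z ∈ ball (0:ℂ) 1 ∧ deriv f z = 0},
      (countable_zeros hf.deriv hder).image _, fun t ht => ?_⟩
    have hsimple : ∀ z ∈ ball (0:ℂ) 1, f z = t * Complex.I → deriv f z ≠ 0 := by
      intro z hz hzt h0
      exact ht ⟨z, ⟨hz, h0⟩, by simp [hzt]⟩
    set Z := {z | z ∈ ball (0:ℂ) 1 ∧ f z = t * Complex.I} with hZ
    have hs : ∀ z : ℂ, ∃ s : ℝ, z ∈ Z → 0 < s ∧ ∀ x : ℝ, x ≠ 0 → |x| ≤ s →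
      z + x * (deriv f z)⁻¹ ∈ ball (0:ℂ) 1 ∧ (f (z + x * (deriv f z)⁻¹)).re ≠ 0 := by
      intro z
      by_cases hz : z ∈ Z
      · obtain ⟨s, hs⟩ := simple_zero_signs hf hz.1 hz.2 (hsimple z hz.1 hz.2)
        exact ⟨s, fun _ => hs⟩
      · exact ⟨0, fun h => absurd h hz⟩
    choose s hs using hs
    have hmem : ∀ z ∈ Z, z + s z * (deriv f z)⁻¹ ∈ U ∧
        z + (-s z : ℝ) * (deriv f z)⁻¹ ∈ U := by
      intro z hz
      obtain ⟨h1, h2⟩ := hs z hz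
      exact ⟨h2 _ h1.ne' (abs_of_pos h1).le, h2 (-s z) (by simpa using h1.ne')
        (by rw [abs_neg, abs_of_pos h1])⟩
    set Φ : ℂ → Set ℂ × Set ℂ := fun z =>
      (connectedComponentIn U (z + s z * (deriv f z)⁻¹),
       connectedComponentIn U (z + (-s z : ℝ) * (deriv f z)⁻¹)) with hΦ
    have hmaps : Set.MapsTo Φ Z (nodalComponents U ×ˢ nodalComponents U) := by
      intro z hz
      exact ⟨⟨_, (hmem z hz).1, rfl⟩, ⟨_, (hmem z hz).2, rfl⟩⟩
    have hinj : Set.InjOn Φ Z := by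
      intro z₁ hz₁ z₂ hz₂ heq
      by_contra hne
      have e1 := (Prod.ext_iff.1 heq).1
      have e2 := (Prod.ext_iff.1 heq).2
      exact no_double hf hz₁.1 hne hz₂.1 hz₁.2 (hsimple _ hz₁.1 hz₁.2) hz₂.2
        (hs _ hz₁).1 (hs _ hz₂).1 (hs _ hz₁).2 (hs _ hz₂).2
        (joined_of_component hUo (hmem _ hz₁).1 (hmem _ hz₂).1 e1)
        (joined_of_component hUo (hmem _ hz₁).2 (hmem _ hz₂).2 e2)
    have hfinP := hfin.prod hfin
    have hZfin : Z.Finite := Set.Finite.of_injOn hmaps hinj hfinP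
    refine ⟨hZfin.toFinset, ?_, fun z hz hzt => ⟨by simpa using ⟨hz, hzt⟩, hsimple z hz hzt⟩⟩
    rw [← Set.ncard_eq_toFinset_card Z hZfin]
    calc Z.ncard ≤ (nodalComponents U ×ˢ nodalComponents U).ncard :=
          Set.ncard_le_ncard_of_injOn Φ hmaps hinj hfinP
      _ = (nodalComponents U).ncard * (nodalComponents U).ncard := Set.ncard_prod
      _ ≤ k * k := Nat.mul_le_mul hcard hcard
  · push Not at hder
    refine ⟨∅, Set.countable_empty, fun t _ => ⟨∅, by simp, fun z hz hzt => ?_⟩⟩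
    exfalso
    obtain ⟨w, hw, hw0⟩ := hne
    have := isOpen_ball.is_const_of_deriv_eq_zero (convex_ball (0:ℂ) 1).isPreconnected
      hf.differentiableOn (fun x hx => hder x hx) hz hw
    rw [← this, hzt] at hw0
    simp at hw0

lemma divisor_analytic_zero {F : ℂ → ℂ} {U : Set ℂ} (hF : AnalyticOnNhd ℂ F U) {z : ℂ}
    (h : F z ≠ 0) : MeromorphicOn.divisor F U z = 0 := by
  by_cases hz : z ∈ U
  · rw [MeromorphicOn.AnalyticOnNhd.divisor_apply hF hz, (hF z hz).analyticOrderAt_eq_zero.2 h]; simp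
  · simp [hz]

lemma jensen_bound {F : ℂ → ℂ} {R : ℝ} (hR : 1 / 4 < R) (hR1 : R < 1)
    (hF : AnalyticOnNhd ℂ F (closedBall 0 R)) (A : Finset ℂ)
    (hA : ∀ z ∈ closedBall (0:ℂ) R, F z = 0 → z ∈ A ∧ deriv F z ≠ 0 ∧ 1 / 4 ≤ ‖z‖)
    (h0 : F 0 ≠ 0) :
    Real.circleAverage (fun z => Real.log ‖F z‖) 0 R ≤ A.card * Real.log 4 + Real.log ‖F 0‖ := by
  have hRp : 0 < R := by linarith
  have habs : |R| = R := abs_of_pos hRp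
  rw [AnalyticOnNhd.circleAverage_log_norm hRp.ne' (by rwa [habs]) h0, habs]
  gcongr
  have hlog4 : 0 ≤ Real.log 4 := Real.log_nonneg (by norm_num)
  have hterm : ∀ u : ℂ, F u = 0 → u ∈ closedBall (0:ℂ) R →
      ((MeromorphicOn.divisor F (closedBall 0 R) u : ℤ) : ℝ) * Real.log (R * ‖0 - u‖⁻¹) ≤ Real.log 4 := by
    intro u hu hub
    obtain ⟨-, hd, hn⟩ := hA u hub hu
    have : MeromorphicOn.divisor F (closedBall 0 R) u = 1 := by
      rw [MeromorphicOn.AnalyticOnNhd.divisor_apply hF hub, (hF u hub).analyticOrderAt_eq_one_of_zero_deriv_ne_zero hu hd]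
      rfl
    rw [this, Int.cast_one, one_mul, zero_sub, norm_neg]
    have hup : 0 < ‖u‖ := by linarith
    apply Real.log_le_log (by positivity)
    rw [← div_eq_mul_inv, div_le_iff₀ hup]; linarith
  rw [finsum_eq_sum_of_support_subset (s := A)]
  · calc _ ≤ ∑ i ∈ A, Real.log 4 := by
          apply Finset.sum_le_sum
          intro u _
          by_cases hu : F u = 0
          · by_cases hub : u ∈ closedBall (0:ℂ) R
            · exact hterm u hu hub
            · simp only [Function.locallyFinsuppWithin.apply_eq_zero_of_notMem _ hub]; simpa using hlog4
          · rw [divisor_analytic_zero hF hu]; simpa using hlog4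
      _ = _ := by simp
  · intro u hu
    by_contra hc
    apply hu
    by_cases hub : u ∈ closedBall (0:ℂ) R
    · have : F u ≠ 0 := fun h => hc (hA u hub h).1
      simp only [divisor_analytic_zero hF this]; simp
    · simp only [Function.locallyFinsuppWithin.apply_eq_zero_of_notMem _ hub]; simp

lemma canonicalFactor_ge {R : ℝ} (hR : 0 < R) {i w : ℂ} (hi : ‖i‖ < R) (hw : ‖w‖ < R) (hne : w ≠ i) :
    1 ≤ ‖Complex.canonicalFactor R i w‖ := by
  rw [Complex.canonicalFactor_apply, norm_div]
  have h1 : 0 < ‖(R:ℂ) * (w - i)‖ := by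
    rw [norm_pos_iff]
    exact mul_ne_zero (by exact_mod_cast hR.ne') (sub_ne_zero.2 hne)
  rw [le_div_iff₀ h1, one_mul]
  apply le_of_sq_le_sq _ (norm_nonneg _)
  have e1 : ‖i‖ ^ 2 < R ^ 2 := by gcongr
  have e2 : ‖w‖ ^ 2 < R ^ 2 := by gcongr
  simp only [Complex.sq_norm, Complex.normSq_apply] at *
  simp [pow_two] at *
  nlinarith [mul_pos (sub_pos.2 e1) (sub_pos.2 e2)]

lemma poisson_bound {F : ℂ → ℂ} {R r : ℝ} (hr : 0 ≤ r) (hrR : r < R)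
    (hF : AnalyticOnNhd ℂ F (closedBall 0 R)) (hs : ∀ z ∈ sphere (0:ℂ) R, F z ≠ 0)
    {w : ℂ} (hw : ‖w‖ ≤ r) (hw0 : F w ≠ 0) :
    Real.log ‖F w‖ ≤ (R / (R - r)) ^ 2 * 
      Real.circleAverage (fun z => Real.posLog ‖F z‖) 0 R := by
  have hR : 0 < R := by linarith
  have hwb : w ∈ closedBall (0:ℂ) R := by simp; linarith
  have hwb' : w ∈ ball (0:ℂ) R := by simp; linarith
  have hord : ∀ z ∈ closedBall (0:ℂ) R, F z ≠ 0 → meromorphicOrderAt F z = 0 := by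
    intro z hz h
    rw [(hF z hz).meromorphicOrderAt_eq, (hF z hz).analyticOrderAt_eq_zero.2 h]; rfl
  have htop : ∀ u : (closedBall (0 : ℂ) R), meromorphicOrderAt F u ≠ ⊤ := by
    intro u
    apply hF.meromorphicOn.meromorphicOrderAt_ne_top_of_isPreconnected
      (convex_closedBall (0:ℂ) R).isPreconnected hwb u.2
    rw [hord w hwb hw0]; simp
  obtain ⟨h, D⟩ := hF.meromorphicOn.exists_ecanonicalDecomp htop
  have hFb : AnalyticOnNhd ℂ F (ball 0 R) := hF.mono ball_subset_closedBall
  have hFs : AnalyticOnNhd ℂ F (sphere 0 R) := hF.mono sphere_subset_closedBall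
  have hdivs : ∀ i, MeromorphicOn.divisor F (sphere 0 R) i = 0 := by
    intro i
    by_cases hi : i ∈ sphere (0:ℂ) R
    · exact divisor_analytic_zero hFs (hs i hi)
    · exact Function.locallyFinsuppWithin.apply_eq_zero_of_notMem _ hi
  have hlog : ∀ z ∈ closedBall (0:ℂ) R, F z ≠ 0 → Real.log ‖h z‖ =
      (∑ᶠ i, (MeromorphicOn.divisor F (ball 0 R) i : ℝ) * Real.log ‖Complex.canonicalFactor R i z‖)
        + Real.log ‖F z‖ := by
    intro z hz hz0
    rw [D.log_norm_eq hz (hord z hz hz0) hR, (hF z hz).meromorphicTrailingCoeffAt_of_ne_zero hz0]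
    simp [hdivs]
  have hsph : ∀ z ∈ sphere (0:ℂ) R, Real.log ‖h z‖ = Real.log ‖F z‖ := by
    intro z hz
    rw [hlog z (sphere_subset_closedBall hz) (hs z hz), finsum_eq_zero_of_forall_eq_zero, zero_add]
    intro i
    by_cases hi : i ∈ ball (0:ℂ) R
    · rw [Complex.norm_canonicalFactor_eval_circle_eq_one hi hz]; simp
    · simp only [Function.locallyFinsuppWithin.apply_eq_zero_of_notMem _ hi]; simp
  have h1 : Real.log ‖F w‖ ≤ Real.log ‖h w‖ := by
    rw [hlog w hwb hw0]
    apply le_add_of_nonneg_left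
    apply finsum_nonneg
    intro i
    by_cases hi : i ∈ ball (0:ℂ) R
    · by_cases hiw : w = i
      · rw [divisor_analytic_zero hFb (by rwa [← hiw])]; simp
      · apply mul_nonneg
        · exact_mod_cast (MeromorphicOn.AnalyticOnNhd.divisor_nonneg hFb i)
        · apply Real.log_nonneg
          exact canonicalFactor_ge hR (by simpa using hi) (by simpa using hwb') hiw
    · simp only [Function.locallyFinsuppWithin.apply_eq_zero_of_notMem _ hi]; simp
  refine h1.trans ?_
  have hharm : InnerProductSpace.HarmonicOnNhd (fun z => Real.log ‖h z‖) (closedBall 0 R) :=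
    fun z hz => (D.analyticOnNhd z hz).harmonicAt_log_norm (D.ne_zero z hz)
  have h2 := hharm.circleAverage_poissonKernel_smul hwb'
  rw [← h2, ← smul_eq_mul, ← Real.circleAverage_fun_smul]
  have habs : |R| = R := abs_of_pos hR
  have hFc : ContinuousOn F (sphere 0 R) := hFs.continuousOn
  apply Real.circleAverage_mono
  · apply ContinuousOn.circleIntegrable hR.le
    apply ContinuousOn.smul
    · unfold poissonKernel
      apply ContinuousOn.div (by fun_prop) (by fun_prop)
      intro z hz h0
      simp [sub_eq_zero] at h0 hz hwb'
      rw [h0] at hz; linarith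
    · exact fun z hz => (hharm z (sphere_subset_closedBall hz)).1.continuousAt.continuousWithinAt
  · apply ContinuousOn.circleIntegrable hR.le
    have h6 := Real.continuous_posLog.comp_continuousOn hFc.norm
    exact h6.const_smul ((R / (R - r)) ^ 2)
  · intro z hz
    rw [habs] at hz
    simp only [Pi.smul_apply', smul_eq_mul]
    rw [hsph z hz]
    have hzR : ‖z‖ = R := by simpa using hz
    have hk0 : 0 ≤ poissonKernel 0 w z := by
      unfold poissonKernel; simp [hzR]
      apply div_nonneg _ (by positivity)
      have : ‖w‖ ^ 2 ≤ R ^ 2 := by gcongr; linarith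
      linarith
    have hk1 : poissonKernel 0 w z ≤ (R / (R - r)) ^ 2 := by
      unfold poissonKernel; simp [hzR]
      rw [div_pow]
      have h5 : R - r ≤ ‖z - w‖ := by
        have := norm_sub_norm_le z w
        linarith
      have : 0 < R - r := by linarith
      gcongr
      nlinarith [sq_nonneg ‖w‖]
    calc _ ≤ poissonKernel 0 w z * Real.posLog ‖F z‖ := by
          gcongr; exact le_max_right _ _
      _ ≤ _ := by gcongr; exact Real.posLog_nonneg

lemma lintegral_neglog_ne_top : ∫⁻ s : ℝ, ENNReal.ofReal (Real.posLog |s|⁻¹) ≠ ⊤ := by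
  have h1 : IntegrableOn Real.log (Set.Ioc (-1) 1) volume := by
    have := intervalIntegral.intervalIntegrable_log' (a := -1) (b := 1)
    exact (intervalIntegrable_iff_integrableOn_Ioc_of_le (by norm_num)).1 this
  have h2 : Integrable (Set.indicator (Set.Ioc (-1) 1) (fun s => |Real.log s|)) volume :=
    (integrable_indicator_iff measurableSet_Ioc).2 h1.abs
  have h3 := h2.lintegral_lt_top
  refine ne_top_of_le_ne_top h3.ne (lintegral_mono fun s => ENNReal.ofReal_le_ofReal ?_)
  by_cases hs : s ∈ Set.Ioc (-1:ℝ) 1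
  · rw [Set.indicator_of_mem hs, Real.posLog, Real.log_inv, Real.log_abs]
    exact max_le (abs_nonneg _) (neg_le_abs _)
  · rw [Set.indicator_of_notMem hs]
    have : 1 ≤ |s| := by
      by_contra h
      push Not at h
      rw [abs_lt] at h
      exact hs ⟨h.1, h.2.le⟩
    rw [Real.posLog, Real.log_inv]
    exact max_le le_rfl (by have := Real.log_nonneg this; linarith)

lemma lintegral_neglog_le (w : ℂ) (J : Set ℝ) :
    ∫⁻ t in J, ENNReal.ofReal (Real.posLog ‖w - t * Complex.I‖⁻¹) ≤
      ∫⁻ s : ℝ, ENNReal.ofReal (Real.posLog |s|⁻¹) := by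
  calc _ ≤ ∫⁻ t : ℝ, ENNReal.ofReal (Real.posLog ‖w - t * Complex.I‖⁻¹) := setLIntegral_le_lintegral _ _
    _ ≤ ∫⁻ t : ℝ, ENNReal.ofReal (Real.posLog |w.im - t|⁻¹) := by
        apply lintegral_mono_ae
        have : ∀ᵐ t : ℝ, t ≠ w.im := by
          rw [ae_iff]; simp
        filter_upwards [this] with t ht
        apply ENNReal.ofReal_le_ofReal
        have h1 : 0 < |w.im - t| := abs_pos.2 (sub_ne_zero.2 (Ne.symm ht))
        have h2 : |w.im - t| ≤ ‖w - t * Complex.I‖ := by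
          simpa using Complex.abs_im_le_norm (w - t * Complex.I)
        apply Real.posLog_le_posLog (by positivity)
        gcongr
    _ = _ := lintegral_sub_left_eq_self (fun s : ℝ => ENNReal.ofReal (Real.posLog |s|⁻¹)) w.im

lemma select_radius (R0 R1 : ℝ) (h01 : R0 < R1) (hR0p : 0 < R0) (hR1p : R1 < 1) :
    ∃ K3 : ENNReal, K3 ≠ ⊤ ∧ ∀ f : ℂ → ℂ, AnalyticOnNhd ℂ f (ball 0 1) →
      ∀ (T : ℝ) (S : Set ℝ), S.Countable → ∃ t : ℝ, t ∉ S ∧ t ∈ Set.Icc T (T + 1) ∧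
      ∀ B : Set ℝ, B.Countable → ∃ R : ℝ, R ∉ B ∧ R ∈ Set.Icc R0 R1 ∧
        ∫⁻ θ in Set.Ioc 0 (2 * Real.pi),
          ENNReal.ofReal (Real.posLog ‖f (circleMap 0 R θ) - t * Complex.I‖⁻¹) ≤ K3 := by
  set K : ENNReal := ∫⁻ s : ℝ, ENNReal.ofReal (Real.posLog |s|⁻¹) with hK
  have hKt : K ≠ ⊤ := lintegral_neglog_ne_top
  set μρ : Measure ℝ := volume.restrict (Set.Icc R0 R1) with hμρ
  set μθ : Measure ℝ := volume.restrict (Set.Ioc 0 (2 * Real.pi)) with hμθ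
  set K2 : ENNReal := K * (μρ.prod μθ) Set.univ with hK2
  set K3 : ENNReal := K2 / μρ Set.univ with hK3
  have hμρu : μρ Set.univ ≠ 0 := by simp [hμρ, h01]
  have hμρ0 : μρ ≠ 0 := fun h => hμρu (by simp [h])
  have hK2t : K2 ≠ ⊤ := by
    rw [hK2]
    exact ENNReal.mul_ne_top hKt (measure_ne_top _ _)
  have hK3t : K3 ≠ ⊤ := ENNReal.div_ne_top hK2t hμρu
  refine ⟨K3, hK3t, ?_⟩
  intro f hf T S hS
  set g : ℂ → ℂ := (ball (0:ℂ) 1).indicator f with hg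
  have hgm : Measurable g := by
    classical
    rw [hg, ← Set.piecewise_eq_indicator]
    exact hf.continuousOn.measurable_piecewise continuousOn_const isOpen_ball.measurableSet
  set G : ℝ → ℝ × ℝ → ENNReal := fun t x =>
    ENNReal.ofReal (Real.posLog ‖g (circleMap 0 x.1 x.2) - t * Complex.I‖⁻¹) with hG
  have hcm : Measurable (fun x : ℝ × ℝ => circleMap 0 x.1 x.2) := by
    unfold circleMap; fun_prop
  have hGm : Measurable (Function.uncurry G) := by
    apply ENNReal.measurable_ofReal.comp
    apply Real.continuous_posLog.measurable.comp
    apply Measurable.inv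
    apply Measurable.norm
    apply Measurable.sub
    · exact hgm.comp (hcm.comp measurable_snd)
    · exact (Complex.measurable_ofReal.comp measurable_fst).mul_const _
  set μt : Measure ℝ := volume.restrict (Set.Icc T (T + 1)) with hμt
  have : IsProbabilityMeasure μt := ⟨by simp [hμt]⟩
  have hswap : ∫⁻ t, ∫⁻ x, G t x ∂(μρ.prod μθ) ∂μt ≤ K2 := by
    rw [lintegral_lintegral_swap hGm.aemeasurable]
    calc _ ≤ ∫⁻ x, K ∂(μρ.prod μθ) := lintegral_mono fun x => lintegral_neglog_le _ _
      _ = _ := by rw [lintegral_const]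
  have hnull : μt (S ∪ (Set.Icc T (T + 1))ᶜ) = 0 := by
    apply measure_union_null
    · exact hS.measure_zero _
    · rw [hμt, Measure.restrict_apply measurableSet_Icc.compl]; simp
  have hHm : Measurable (fun t => ∫⁻ x, G t x ∂(μρ.prod μθ)) := hGm.lintegral_prod_right'
  generalize hH : (fun t => ∫⁻ x, G t x ∂(μρ.prod μθ)) = H at hHm
  have hHle : ∀ t, ∫⁻ x, G t x ∂(μρ.prod μθ) ≤ H t := fun t => by rw [← hH]
  have hswap' : ∫⁻ t, H t ∂μt ≤ K2 := by rw [← hH]; exact hswap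
  obtain ⟨t, htN, ht'⟩ := exists_notMem_null_le_lintegral hHm.aemeasurable hnull
  have ht : ∫⁻ x, G t x ∂(μρ.prod μθ) ≤ K2 := (hHle t).trans (ht'.trans hswap')
  simp only [Set.mem_union, not_or, Set.mem_compl_iff, not_not] at htN
  obtain ⟨htS, htI⟩ := htN
  refine ⟨t, htS, htI, fun B hB => ?_⟩
  have hGt : Measurable (G t) := hGm.of_uncurry_left
  have ht2 : ∫⁻ ρ, ∫⁻ θ, G t (ρ, θ) ∂μθ ∂μρ ≤ K2 := by
    rw [← lintegral_prod _ hGt.aemeasurable]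
    exact ht
  have hnull2 : μρ (B ∪ (Set.Icc R0 R1)ᶜ) = 0 := by
    apply measure_union_null
    · exact hB.measure_zero _
    · rw [hμρ, Measure.restrict_apply measurableSet_Icc.compl]; simp
  have hLm : Measurable (fun ρ => ∫⁻ θ, G t (ρ, θ) ∂μθ) := hGt.lintegral_prod_right'
  obtain ⟨R, hRN, hRle⟩ := exists_notMem_null_le_laverage hμρ0 hLm.aemeasurable hnull2
  simp only [Set.mem_union, not_or, Set.mem_compl_iff, not_not] at hRN
  obtain ⟨hRB, hRI⟩ := hRN
  have hRle' : ∫⁻ θ, G t (R, θ) ∂μθ ≤ K3 := by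
    refine hRle.trans ?_
    rw [laverage_eq, hK3]
    gcongr
  refine ⟨R, hRB, hRI, le_trans (le_of_eq ?_) hRle'⟩
  have hRp : 0 < R := by have := hRI.1; linarith
  have hR1' : R < 1 := by have := hRI.2; linarith
  apply lintegral_congr
  intro θ
  have hmem : circleMap 0 R θ ∈ ball (0:ℂ) 1 := by simp [abs_of_pos hRp, hR1']
  simp [hG, hg, Set.indicator_of_mem hmem]

theorem growth_bound (p : ℕ) (M r : ℝ) (hM : 0 ≤ M) (hr : 0 ≤ r) (hr1 : r < 1) :
    ∃ C : ℝ, ∀ f : ℂ → ℂ, AnalyticOnNhd ℂ f (ball 0 1) →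
      (∀ z ∈ ball (0:ℂ) (1 / 4), ‖f z‖ ≤ M) →
      (∃ S : Set ℝ, S.Countable ∧ ∀ t ∉ S, ∃ A : Finset ℂ, A.card ≤ p ∧
        ∀ z ∈ ball (0:ℂ) 1, f z = t * Complex.I → z ∈ A ∧ deriv f z ≠ 0) →
      ∀ z : ℂ, ‖z‖ ≤ r → ‖f z‖ ≤ C := by
  have h01 : (1 + r) / 2 < (3 + r) / 4 := by linarith
  obtain ⟨K3, hK3t, hsel⟩ := select_radius ((1 + r) / 2) ((3 + r) / 4) h01 (by linarith) (by linarith)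
  set R0 : ℝ := (1 + r) / 2 with hR0
  set R1 : ℝ := (3 + r) / 4 with hR1
  set C1 : ℝ := p * Real.log 4 + Real.log (2 * M + 2) + (2 * Real.pi)⁻¹ * K3.toReal with hC1
  refine ⟨Real.exp ((1 / (R0 - r)) ^ 2 * C1) + (M + 2), ?_⟩
  rintro f hf hfM ⟨S, hS, hSA⟩
  set T := M + 1 with hT
  obtain ⟨t, htS, htI, hsel⟩ := hsel f hf T S hS
  obtain ⟨A, hAc, hA⟩ := hSA t htS
  obtain ⟨R, hRA, hRI, hRle'⟩ := hsel ((fun z : ℂ => ‖z‖) '' (A : Set ℂ)) (A.countable_toSet.image _)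
  have hRp : 0 < R := by have := hRI.1; linarith
  have hR1' : R < 1 := by have := hRI.2; linarith
  have hsubb : closedBall (0:ℂ) R ⊆ ball 0 1 := closedBall_subset_ball hR1'
  set F : ℂ → ℂ := fun z => f z - t * Complex.I with hFdef
  have hF : AnalyticOnNhd ℂ F (ball 0 1) := hf.sub analyticOnNhd_const
  have hFR : AnalyticOnNhd ℂ F (closedBall 0 R) := hF.mono hsubb
  have hFz : ∀ z, F z = 0 → f z = t * Complex.I := fun z h => sub_eq_zero.1 h
  have hsph : ∀ z ∈ sphere (0:ℂ) R, F z ≠ 0 := by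
    intro z hz h
    exact hRA ⟨z, (hA z (hsubb (sphere_subset_closedBall hz)) (hFz z h)).1, by simpa using hz⟩
  have htn : ‖(t:ℂ) * Complex.I‖ = t := by
    have := htI.1
    simp; linarith
  have hsmall : ∀ z ∈ ball (0:ℂ) (1/4), F z ≠ 0 := by
    intro z hz h
    have := hfM z hz
    rw [hFz z h, htn] at this
    have := htI.1; linarith
  have hF0 : F 0 ≠ 0 := hsmall 0 (by simp)
  have hj := jensen_bound (by linarith [hRI.1]) hR1' hFR A (by
    intro z hz h
    obtain ⟨h1, h2⟩ := hA z (hsubb hz) (hFz z h)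
    refine ⟨h1, ?_, ?_⟩
    · rw [hFdef, deriv_sub_const]; exact h2
    · by_contra hc
      exact hsmall z (by simpa using hc) h) hF0
  have hF0n : Real.log ‖F 0‖ ≤ Real.log (2 * M + 2) := by
    apply Real.log_le_log (norm_pos_iff.2 hF0)
    have h1 := norm_sub_le (f 0) (t * Complex.I)
    rw [htn] at h1
    have h2 := hfM 0 (by simp)
    have h3 := htI.2
    show ‖f 0 - t * Complex.I‖ ≤ _
    linarith
  have habs : |R| = R := abs_of_pos hRp
  have hFc : ContinuousOn F (sphere 0 R) := (hFR.mono sphere_subset_closedBall).continuousOn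
  have hFinv : ContinuousOn (fun z => ‖F z‖⁻¹) (sphere 0 R) :=
    hFc.norm.inv₀ fun z hz => norm_ne_zero_iff.2 (hsph z hz)
  have hi1 : CircleIntegrable (fun z => Real.posLog ‖F z‖⁻¹) 0 R :=
    (Real.continuous_posLog.comp_continuousOn hFinv).circleIntegrable hRp.le
  have hi2 : CircleIntegrable (fun z => Real.posLog ‖F z‖) 0 R :=
    (Real.continuous_posLog.comp_continuousOn hFc.norm).circleIntegrable hRp.le
  have hneg : Real.circleAverage (fun z => Real.posLog ‖F z‖⁻¹) 0 R ≤
      (2 * Real.pi)⁻¹ * K3.toReal := by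
    rw [Real.circleAverage_def, smul_eq_mul]
    gcongr
    rw [intervalIntegral.integral_of_le (by positivity), integral_eq_lintegral_of_nonneg_ae
      (Eventually.of_forall fun _ => Real.posLog_nonneg) ?_]
    · apply ENNReal.toReal_mono hK3t
      exact hRle'
    · have := hi1
      rw [CircleIntegrable, intervalIntegrable_iff_integrableOn_Ioc_of_le (by positivity)] at this
      exact this.aestronglyMeasurable
  have hsum : Real.circleAverage (fun z => Real.log ‖F z‖) 0 R =
      Real.circleAverage (fun z => Real.posLog ‖F z‖) 0 R -
      Real.circleAverage (fun z => Real.posLog ‖F z‖⁻¹) 0 R := by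
    rw [← Real.circleAverage_fun_sub hi2 hi1]
    simp only [Real.posLog_sub_posLog_inv]
  have hpos : Real.circleAverage (fun z => Real.posLog ‖F z‖) 0 R ≤ C1 := by
    have hl4 : 0 ≤ Real.log 4 := Real.log_nonneg (by norm_num)
    have : (A.card : ℝ) * Real.log 4 ≤ p * Real.log 4 := by gcongr
    linarith
  have hpos0 : 0 ≤ Real.circleAverage (fun z => Real.posLog ‖F z‖) 0 R := by
    rw [Real.circleAverage_def, smul_eq_mul]
    apply mul_nonneg (by positivity)
    exact intervalIntegral.integral_nonneg (by positivity) fun _ _ => Real.posLog_nonneg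
  intro w hw
  have hfw : ‖f w‖ ≤ ‖F w‖ + (M + 2) := by
    have : f w = F w + t * Complex.I := by simp [hFdef]
    rw [this]
    refine (norm_add_le _ _).trans ?_
    rw [htn]; have := htI.2; linarith
  refine hfw.trans ?_
  gcongr
  by_cases hw0 : F w = 0
  · rw [hw0, norm_zero]; positivity
  · have hrR : r < R := by have := hRI.1; linarith
    have h1 := poisson_bound hr hrR hFR hsph hw hw0
    rw [← Real.log_le_iff_le_exp (norm_pos_iff.2 hw0)]
    refine h1.trans ?_
    have h2 : 0 < R0 - r := by linarith
    have h3 : R0 ≤ R := hRI.1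
    gcongr

theorem montel_disc (f : ℕ → ℂ → ℂ) (hf : ∀ k, AnalyticOnNhd ℂ (f k) (ball 0 1))
    (hb : ∀ r : ℝ, 0 ≤ r → r < 1 → ∃ C : ℝ, ∀ k, ∀ z : ℂ, ‖z‖ ≤ r → ‖f k z‖ ≤ C) :
    ∃ φ : ℕ → ℕ, StrictMono φ ∧ ∃ g : ℂ → ℂ, AnalyticOnNhd ℂ g (ball 0 1) ∧
      ∀ r : ℝ, 0 ≤ r → r < 1 →
        TendstoUniformlyOn (fun i => f (φ i)) g atTop (closedBall 0 r) := by
  set a : ℕ → ℕ → ℂ := fun k n => ((n.factorial : ℂ))⁻¹ * iteratedDeriv n (f k) 0 with ha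
  have hsum : ∀ k, ∀ z ∈ ball (0:ℂ) 1, HasSum (fun n => a k n * z ^ n) (f k z) := by
    intro k z hz
    have := Complex.hasSum_taylorSeries_on_ball (hf k).differentiableOn hz
    have h2 : (fun n => a k n * z ^ n) = fun n =>
        ((n.factorial : ℂ))⁻¹ • (z - 0) ^ n • iteratedDeriv n (f k) 0 := by
      funext n
      simp only [ha, smul_eq_mul, sub_zero]
      ring
    rw [h2]
    exact this
  have hcoef : ∀ r : ℝ, 0 < r → r < 1 → ∃ C : ℝ, ∀ k n, ‖a k n‖ ≤ C / r ^ n := by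
    intro r hr hr1
    obtain ⟨C, hC⟩ := hb r hr.le hr1
    refine ⟨C, fun k n => ?_⟩
    have h1 : DiffContOnCl ℂ (f k) (ball 0 r) :=
      ((hf k).differentiableOn.mono (closedBall_subset_ball hr1)).diffContOnCl_ball subset_rfl
    have h2 := Complex.norm_iteratedDeriv_le_of_forall_mem_sphere_norm_le n hr h1
      (fun z hz => hC k z (by simp at hz; exact hz.le))
    have hn : (0:ℝ) < n.factorial := by exact_mod_cast n.factorial_pos
    simp only [ha, norm_mul, norm_inv, Complex.norm_natCast]
    rw [inv_mul_le_iff₀ hn]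
    refine h2.trans (le_of_eq ?_)
    ring
  obtain ⟨C0, hC0⟩ := hcoef (1/2) (by norm_num) (by norm_num)
  have hcpt : IsCompact (Set.univ.pi fun n : ℕ => closedBall (0:ℂ) (C0 / (1/2) ^ n)) :=
    isCompact_univ_pi fun n => isCompact_closedBall _ _
  obtain ⟨b, -, φ, hφ, hlim⟩ := hcpt.tendsto_subseq (x := a)
    (fun k n _ => by simpa using hC0 k n)
  have hlim' : ∀ n, Tendsto (fun i => a (φ i) n) atTop (nhds (b n)) := by
    intro n
    exact (tendsto_pi_nhds.1 hlim) n
  have hbc : ∀ r : ℝ, 0 < r → r < 1 → ∃ C : ℝ, (∀ k n, ‖a k n‖ ≤ C / r ^ n) ∧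
      ∀ n, ‖b n‖ ≤ C / r ^ n := by
    intro r hr hr1
    obtain ⟨C, hC⟩ := hcoef r hr hr1
    exact ⟨C, hC, fun n => le_of_tendsto (hlim' n).norm (Eventually.of_forall fun i => hC _ n)⟩
  set g : ℂ → ℂ := fun z => ∑' n, b n * z ^ n with hg
  have hunif : ∀ r : ℝ, 0 ≤ r → r < 1 →
        TendstoUniformlyOn (fun i => f (φ i)) g atTop (closedBall 0 r) := by
    intro r hr hr1
    obtain ⟨s, hrs, hs1⟩ := exists_between hr1
    have hs : 0 < s := by linarith
    obtain ⟨C, hCa, hCb⟩ := hbc s hs hs1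
    have hgeo : Summable (fun n : ℕ => C * (r / s) ^ n) :=
      (summable_geometric_of_lt_one (by positivity) ((div_lt_one hs).2 hrs)).mul_left C
    have hbd : ∀ c : ℂ, ∀ n, ‖c‖ ≤ C / s ^ n → ‖c‖ * r ^ n ≤ C * (r / s) ^ n := by
      intro c n hc
      calc ‖c‖ * r ^ n ≤ C / s ^ n * r ^ n := by gcongr
        _ = _ := by rw [div_pow]; ring
    have hbdd : ∀ k n, ‖a k n - b n‖ * r ^ n ≤ 2 * (C * (r / s) ^ n) := by
      intro k n
      have h1 := hbd _ n (hCa k n)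
      have h2 := hbd _ n (hCb n)
      have h3 : ‖a k n - b n‖ * r ^ n ≤ (‖a k n‖ + ‖b n‖) * r ^ n := by
        gcongr; exact norm_sub_le _ _
      linarith
    have hS : ∀ k, Summable (fun n => ‖a k n - b n‖ * r ^ n) := fun k =>
      Summable.of_nonneg_of_le (fun n => by positivity) (hbdd k) (hgeo.mul_left 2)
    have hdom : Tendsto (fun i => ∑' n, ‖a (φ i) n - b n‖ * r ^ n) atTop (nhds (∑' n : ℕ, (0:ℝ))) := by
      refine tendsto_tsum_of_dominated_convergence (hgeo.mul_left 2) (fun n => ?_)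
        (Eventually.of_forall fun i n => ?_)
      · have := ((hlim' n).sub_const (b n)).norm.mul_const (r ^ n)
        simpa using this
      · rw [Real.norm_of_nonneg (by positivity)]; exact hbdd _ n
    rw [tsum_zero] at hdom
    rw [Metric.tendstoUniformlyOn_iff]
    intro ε hε
    filter_upwards [hdom.eventually_lt_const hε] with i hi z hz
    have hzr : ‖z‖ ≤ r := by simpa using hz
    have hza := hsum (φ i) z (by simp; linarith)
    have hzb : HasSum (fun n => b n * z ^ n) (g z) := by
      apply Summable.hasSum
      apply Summable.of_norm_bounded hgeo
      intro n
      rw [norm_mul, norm_pow]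
      refine le_trans ?_ (hbd _ n (hCb n))
      gcongr
    rw [dist_comm, dist_eq_norm]
    have hd := hza.sub hzb
    rw [← hd.tsum_eq]
    refine lt_of_le_of_lt (tsum_of_norm_bounded (hS (φ i)).hasSum fun n => ?_) hi
    rw [← sub_mul, norm_mul, norm_pow]
    gcongr
  refine ⟨φ, hφ, g, ?_, hunif⟩
  have hloc : TendstoLocallyUniformlyOn (fun i => f (φ i)) g atTop (ball 0 1) := by
    rw [tendstoLocallyUniformlyOn_iff_forall_isCompact isOpen_ball]
    intro K hK hKc
    obtain ⟨r, hr, hKr⟩ : ∃ r : ℝ, r < 1 ∧ K ⊆ closedBall 0 r := by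
      rcases K.eq_empty_or_nonempty with rfl | hne
      · exact ⟨0, by norm_num, by simp⟩
      · obtain ⟨x, hx, hmax⟩ := hKc.exists_isMaxOn hne continuous_norm.continuousOn
        exact ⟨‖x‖, by simpa using hK hx, fun y hy => by simpa using hmax hy⟩
    exact (hunif (max r 0) (le_max_right _ _) (max_lt hr one_pos)).mono
      (hKr.trans (closedBall_subset_closedBall (le_max_left _ _)))
  have := hloc.differentiableOn (Eventually.of_forall fun i => (hf (φ i)).differentiableOn) isOpen_ball
  exact this.analyticOnNhd isOpen_ball

lemma lapl_comp_eq {u : EuclideanSpace ℝ (Fin 2) → ℝ}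
    (e : ℂ ≃ₗᵢ[ℝ] EuclideanSpace ℝ (Fin 2))
    (he : ∀ i, e (Complex.orthonormalBasisOneI i) = EuclideanSpace.single i 1) {z : ℂ}
    (hu : ContDiffAt ℝ 2 u (e z)) :
    Laplacian.laplacian (fun w => u (e w)) z = lapl u (e z) := by
  rw [InnerProductSpace.laplacian_eq_iteratedFDeriv_orthonormalBasis _ Complex.orthonormalBasisOneI]
  unfold lapl
  refine Finset.sum_congr rfl fun i _ => ?_
  rw [iteratedFDeriv_two_apply]
  have hev : (fderiv ℝ fun w => u (e w)) = fun w =>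
      (fderiv ℝ u (e w)).comp (e.toContinuousLinearEquiv : ℂ →L[ℝ] EuclideanSpace ℝ (Fin 2)) := by
    funext w
    exact e.toContinuousLinearEquiv.comp_right_fderiv
  have hd : DifferentiableAt ℝ (fderiv ℝ u) (e z) :=
    (hu.fderiv_right (m := 1) (by norm_num)).differentiableAt (by norm_num)
  have hde : HasFDerivAt e (e.toContinuousLinearEquiv : ℂ →L[ℝ] EuclideanSpace ℝ (Fin 2)) z :=
    e.toContinuousLinearEquiv.hasFDerivAt
  have h2 : HasFDerivAt (fun w => fderiv ℝ u (e w)) ((fderiv ℝ (fderiv ℝ u) (e z)).comp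
      (e.toContinuousLinearEquiv : ℂ →L[ℝ] EuclideanSpace ℝ (Fin 2))) z :=
    hd.hasFDerivAt.comp z hde
  have h3 := h2.clm_comp (hasFDerivAt_const
    (e.toContinuousLinearEquiv : ℂ →L[ℝ] EuclideanSpace ℝ (Fin 2)) z)
  rw [hev, h3.fderiv]
  have h4 := hd.hasFDerivAt.clm_apply (hasFDerivAt_const
    (EuclideanSpace.single i (1:ℝ)) (e z))
  rw [h4.fderiv]
  simp [-Complex.coe_orthonormalBasisOneI, he]

lemma he_basis (i : Fin 2) : Complex.orthonormalBasisOneI.repr (Complex.orthonormalBasisOneI i)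
    = EuclideanSpace.single i 1 :=
  OrthonormalBasis.repr_self _ _

lemma harmonic_to_analytic {u : EuclideanSpace ℝ (Fin 2) → ℝ}
    (hu : HarmonicFnOn u (ball (0 : EuclideanSpace ℝ (Fin 2)) 1)) :
    ∃ F : ℂ → ℂ, AnalyticOnNhd ℂ F (ball 0 1) ∧
      ∀ z ∈ ball (0:ℂ) 1, (F z).re = u (Complex.orthonormalBasisOneI.repr z) := by
  set e := Complex.orthonormalBasisOneI.repr with hedef
  have hcd : ∀ z ∈ ball (0:ℂ) 1, ContDiffAt ℝ 2 u (e z) := fun z hz =>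
    hu.1.contDiffAt (isOpen_ball.mem_nhds (by simpa using hz))
  have : InnerProductSpace.HarmonicOnNhd (fun w => u (e w)) (ball (0:ℂ) 1) := by
    intro z hz
    refine ⟨(hcd z hz).comp z e.contDiff.contDiffAt, ?_⟩
    filter_upwards [isOpen_ball.mem_nhds hz] with w hw
    rw [lapl_comp_eq e he_basis (hcd w hw)]
    exact hu.2 _ (by simpa using hw)
  obtain ⟨F, hF, h⟩ := this.exists_analyticOnNhd_ball_re_eq
  exact ⟨F, hF, fun z hz => h hz⟩

lemma analytic_to_harmonic {F : ℂ → ℂ} (hF : AnalyticOnNhd ℂ F (ball 0 1)) :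
    HarmonicFnOn (fun x => (F (Complex.orthonormalBasisOneI.repr.symm x)).re)
      (ball (0 : EuclideanSpace ℝ (Fin 2)) 1) := by
  set e := Complex.orthonormalBasisOneI.repr with hedef
  have hcd : ∀ x ∈ ball (0:EuclideanSpace ℝ (Fin 2)) 1,
      ContDiffAt ℝ 2 (fun x => (F (e.symm x)).re) x := by
    intro x hx
    have h1 : InnerProductSpace.HarmonicAt (fun z => (F z).re) (e.symm x) :=
      (hF (e.symm x) (by simpa using hx)).harmonicAt_re
    exact h1.1.comp x e.symm.contDiff.contDiffAt
  refine ⟨fun x hx => (hcd x hx).contDiffWithinAt, fun x hx => ?_⟩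
  have h1 : InnerProductSpace.HarmonicAt (fun z => (F z).re) (e.symm x) :=
    (hF (e.symm x) (by simpa using hx)).harmonicAt_re
  have h2 := lapl_comp_eq (u := fun x => (F (e.symm x)).re) e he_basis (z := e.symm x)
    (by simpa using hcd x hx)
  simp only [LinearIsometryEquiv.apply_symm_apply, LinearIsometryEquiv.symm_apply_apply] at h2
  rw [← h2]
  exact h1.2.self_of_nhds

lemma nodal_transfer {X Y : Type*} [TopologicalSpace X] [TopologicalSpace Y] (e : X ≃ₜ Y)
    (S : Set X) (T : Set Y) (h : e '' S = T) :
    nodalComponents S = (fun C => e.symm '' C) '' nodalComponents T := by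
  subst h
  ext C
  simp only [nodalComponents, Set.mem_ofPred_eq, Set.mem_image]
  constructor
  · rintro ⟨x, hx, rfl⟩
    refine ⟨_, ⟨e x, ⟨x, hx, rfl⟩, rfl⟩, ?_⟩
    rw [← e.image_connectedComponentIn hx, ← Set.image_comp]
    simp
  · rintro ⟨_, ⟨_, ⟨x, hx, rfl⟩, rfl⟩, rfl⟩
    refine ⟨x, hx, ?_⟩
    rw [← e.image_connectedComponentIn hx, ← Set.image_comp]
    simp

lemma re_not_vanish {F : ℂ → ℂ} (hF : AnalyticOnNhd ℂ F (ball 0 1))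
    (hne : ∃ z ∈ ball (0:ℂ) 1, (F z).re ≠ 0) : ∃ z ∈ ball (0:ℂ) (1/2), (F z).re ≠ 0 := by
  by_contra! hcon
  obtain ⟨z, hz, hz0⟩ := hne
  have h0 : (F 0).re = 0 := hcon 0 (by simp)
  rcases hF.is_constant_or_isOpen (convex_ball 0 1).isPreconnected with ⟨w, hw⟩ | hop
  · apply hz0
    rw [hw z hz, ← hw 0 (by simp)]
    exact h0
  · have := hop (ball 0 (1/2)) (ball_subset_ball (by norm_num)) isOpen_ball
    obtain ⟨ε, hε, hsub⟩ := Metric.isOpen_iff.1 this (F 0) ⟨0, by simp, rfl⟩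
    have hmem : F 0 + (ε/2 : ℝ) ∈ ball (F 0) ε := by
      rw [mem_ball, dist_eq_norm, add_sub_cancel_left, Complex.norm_real, Real.norm_eq_abs,
        abs_of_pos (by positivity)]
      linarith
    obtain ⟨y, hy, hyeq⟩ := hsub hmem
    have h1 := hcon y hy
    rw [hyeq, Complex.add_re, h0, Complex.ofReal_re] at h1
    linarith

lemma normalize_fn {F : ℂ → ℂ} (hF : AnalyticOnNhd ℂ F (ball 0 1))
    (hne : ∃ z ∈ ball (0:ℂ) 1, (F z).re ≠ 0) :
    ∃ (α : ℝ) (f : ℂ → ℂ), α ≠ 0 ∧ AnalyticOnNhd ℂ f (ball 0 1) ∧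
      (∀ z, (f z).re = α * (F z).re) ∧ (∀ z ∈ ball (0:ℂ) (1/4), ‖f z‖ ≤ 5) ∧
      ∃ z ∈ closedBall (0:ℂ) (1/2), |(f z).re| = 1 := by
  have hcont : ContinuousOn (fun z => |(F z).re|) (closedBall (0:ℂ) (1/2)) :=
    (Complex.continuous_re.comp_continuousOn
      (hF.continuousOn.mono (closedBall_subset_ball (by norm_num)))).abs
  obtain ⟨z₀, hz₀, hmax⟩ := (isCompact_closedBall (0:ℂ) (1/2)).exists_isMaxOn
    ⟨0, by simp⟩ hcont
  obtain ⟨z₁, hz₁, hz₁0⟩ := re_not_vanish hF hne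
  have hle : ∀ z ∈ closedBall (0:ℂ) (1/2), |(F z).re| ≤ |(F z₀).re| := fun z hz => hmax hz
  have hm : 0 < |(F z₀).re| := (abs_pos.2 hz₁0).trans_le (hle z₁ (ball_subset_closedBall hz₁))
  set m := |(F z₀).re| with hmdef
  set f : ℂ → ℂ := fun z => ((m⁻¹ : ℝ) : ℂ) * (F z - ((F 0).im : ℝ) * Complex.I) with hf
  have hre : ∀ z, (f z).re = m⁻¹ * (F z).re := by
    intro z
    simp [hf, -Complex.ofReal_inv]
  have hfa : AnalyticOnNhd ℂ f (ball 0 1) :=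
    analyticOnNhd_const.mul (hF.sub analyticOnNhd_const)
  have hab : ∀ z ∈ closedBall (0:ℂ) (1/2), |(f z).re| ≤ 1 := by
    intro z hz
    rw [hre, abs_mul, abs_of_pos (inv_pos.2 hm), inv_mul_le_iff₀ hm, mul_one]
    exact hle z hz
  have hf0 : ‖f 0‖ ≤ 1 := by
    have him : (f 0).im = 0 := by simp [hf, -Complex.ofReal_inv]
    have : f 0 = ((f 0).re : ℂ) := by
      apply Complex.ext <;> simp [him]
    rw [this, Complex.norm_real]
    exact hab 0 (by simp)
  refine ⟨m⁻¹, f, (inv_pos.2 hm).ne', hfa, hre, fun z hz => ?_, z₀, hz₀, ?_⟩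
  · have hz4 : ‖z‖ < 1/4 := by simpa using hz
    have hb := Complex.borelCaratheodory (f := f) (M := 1) (R := 1/2) (z := z) one_pos
      (hfa.differentiableOn.mono (ball_subset_ball (by norm_num)))
      (fun w hw => (le_abs_self _).trans (hab w (ball_subset_closedBall hw)))
      (by norm_num) (ball_subset_ball (by norm_num) hz)
    refine hb.trans ?_
    have hpos : 0 < 1/2 - ‖z‖ := by linarith
    rw [← add_div, div_le_iff₀ hpos]
    have := norm_nonneg z
    nlinarith [norm_nonneg (f 0)]
  · rw [hre, abs_mul, abs_of_pos (inv_pos.2 hm)]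
    exact inv_mul_cancel₀ (ne_of_gt hm)

/-- **Nadirashvili's compactness theorem** (Lemma 2.8): a sequence of nontrivial harmonic
functions on the unit disc, each with at most `k₀` nodal regions, admits a subsequence
which, after multiplication by suitable real numbers, converges locally uniformly to a
nontrivial harmonic function. -/
theorem nadirashvili_compactness (k₀ : ℕ)
    (u : ℕ → EuclideanSpace ℝ (Fin 2) → ℝ)
    (hu : ∀ k, HarmonicFnOn (u k) (ball (0 : EuclideanSpace ℝ (Fin 2)) 1))
    (hu0 : ∀ k, ∃ x ∈ ball (0 : EuclideanSpace ℝ (Fin 2)) 1, u k x ≠ 0)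
    (hfin : ∀ k, (nodalComponents
      {x | x ∈ ball (0 : EuclideanSpace ℝ (Fin 2)) 1 ∧ u k x ≠ 0}).Finite)
    (hcomp : ∀ k, (nodalComponents
      {x | x ∈ ball (0 : EuclideanSpace ℝ (Fin 2)) 1 ∧ u k x ≠ 0}).ncard ≤ k₀) :
    ∃ φ : ℕ → ℕ, StrictMono φ ∧
      ∃ (α : ℕ → ℝ) (v : EuclideanSpace ℝ (Fin 2) → ℝ),
        HarmonicFnOn v (ball (0 : EuclideanSpace ℝ (Fin 2)) 1) ∧
        (∃ x ∈ ball (0 : EuclideanSpace ℝ (Fin 2)) 1, v x ≠ 0) ∧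
        ∀ K : Set (EuclideanSpace ℝ (Fin 2)),
          K ⊆ ball (0 : EuclideanSpace ℝ (Fin 2)) 1 → IsCompact K →
          TendstoUniformlyOn (fun i x => α i * u (φ i) x) v atTop K := by
  set e := Complex.orthonormalBasisOneI.repr with hedef
  choose F hF hFu using fun k => harmonic_to_analytic (hu k)
  have hne : ∀ k, ∃ z ∈ ball (0:ℂ) 1, (F k z).re ≠ 0 := by
    intro k
    obtain ⟨x, hx, hx0⟩ := hu0 k
    have hx' : e.symm x ∈ ball (0:ℂ) 1 := by simpa using hx
    refine ⟨e.symm x, hx', ?_⟩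
    rw [hFu k _ hx']
    simpa [← hedef] using hx0
  choose α f hα hfa hfre hf5 hf1 using fun k => normalize_fn (hF k) (hne k)
  have hset : ∀ k, e.symm.toHomeomorph ''
      {x | x ∈ ball (0 : EuclideanSpace ℝ (Fin 2)) 1 ∧ u k x ≠ 0} =
      {z | z ∈ ball (0:ℂ) 1 ∧ (f k z).re ≠ 0} := by
    intro k
    ext z
    constructor
    · rintro ⟨x, ⟨hx, hx0⟩, rfl⟩
      have hx' : e.symm x ∈ ball (0:ℂ) 1 := by simpa using hx
      refine ⟨hx', ?_⟩
      change (f k (e.symm x)).re ≠ 0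
      rw [hfre, hFu k _ hx']
      refine mul_ne_zero (hα k) ?_
      simpa [← hedef] using hx0
    · rintro ⟨hz, hz0⟩
      rw [hfre, hFu k _ hz] at hz0
      exact ⟨e z, ⟨by simpa using hz, right_ne_zero_of_mul hz0⟩, e.symm_apply_apply z⟩
  have hnod : ∀ k, nodalComponents {z | z ∈ ball (0:ℂ) 1 ∧ (f k z).re ≠ 0} =
      (fun C => e.symm.toHomeomorph '' C) '' nodalComponents
        {x | x ∈ ball (0 : EuclideanSpace ℝ (Fin 2)) 1 ∧ u k x ≠ 0} := by
    intro k
    have := nodal_transfer e.symm.toHomeomorph.symm _ _ (by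
      rw [← hset k, ← Set.image_comp]
      simp : e.symm.toHomeomorph.symm '' {z | z ∈ ball (0:ℂ) 1 ∧ (f k z).re ≠ 0} =
        {x | x ∈ ball (0 : EuclideanSpace ℝ (Fin 2)) 1 ∧ u k x ≠ 0})
    exact this
  have hcount : ∀ k, ∃ S : Set ℝ, S.Countable ∧ ∀ t ∉ S, ∃ A : Finset ℂ, A.card ≤ k₀ * k₀ ∧
      ∀ z ∈ ball (0:ℂ) 1, f k z = t * Complex.I → z ∈ A ∧ deriv (f k) z ≠ 0 := by
    intro k
    refine count_zeros (hfa k) ?_ ?_ ?_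
    · obtain ⟨z, hz, hz1⟩ := hf1 k
      refine ⟨z, closedBall_subset_ball (by norm_num) hz, fun h => ?_⟩
      rw [h] at hz1
      simp at hz1
    · rw [hnod k]
      exact (hfin k).image _
    · rw [hnod k]
      exact (Set.ncard_image_le (hfin k)).trans (hcomp k)
  obtain ⟨φ, hφ, g, hg, hlim⟩ := montel_disc f hfa (fun r hr hr1 => by
    obtain ⟨C, hC⟩ := growth_bound (k₀ * k₀) 5 r (by norm_num) hr hr1
    exact ⟨C, fun k z hz => hC (f k) (hfa k) (hf5 k) (hcount k) z hz⟩)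
  refine ⟨φ, hφ, fun i => α (φ i), fun x => (g (e.symm x)).re, analytic_to_harmonic hg, ?_, ?_⟩
  · have h2 := Metric.tendstoUniformlyOn_iff.1 (hlim (1/2) (by norm_num) (by norm_num)) 1 one_pos
    obtain ⟨i, hi⟩ := h2.exists
    obtain ⟨z, hz, hz1⟩ := hf1 (φ i)
    have hz' : z ∈ ball (0:ℂ) 1 := closedBall_subset_ball (by norm_num) hz
    refine ⟨e z, by simpa using hz', fun h0 => ?_⟩
    simp only [LinearIsometryEquiv.symm_apply_apply] at h0
    have h3 := hi z hz
    rw [dist_comm, dist_eq_norm] at h3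
    have h4 := (Complex.abs_re_le_norm (f (φ i) z - g z)).trans_lt h3
    rw [Complex.sub_re, h0, sub_zero, hz1] at h4
    exact lt_irrefl _ h4
  · intro K hK hKc
    obtain ⟨r, hr0, hr, hKr⟩ : ∃ r : ℝ, 0 ≤ r ∧ r < 1 ∧ K ⊆ closedBall 0 r := by
      rcases K.eq_empty_or_nonempty with rfl | hne
      · exact ⟨0, le_rfl, by norm_num, by simp⟩
      · obtain ⟨x, hx, hmax⟩ := hKc.exists_isMaxOn hne continuous_norm.continuousOn
        exact ⟨‖x‖, norm_nonneg _, by simpa using hK hx, fun y hy => by simpa using hmax hy⟩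
    rw [Metric.tendstoUniformlyOn_iff]
    intro ε hε
    filter_upwards [Metric.tendstoUniformlyOn_iff.1 (hlim r hr0 hr) ε hε] with i hi x hx
    have hxr : ‖x‖ ≤ r := by simpa using hKr hx
    have hx1 : e.symm x ∈ ball (0:ℂ) 1 := by simpa using hK hx
    have h3 := hi (e.symm x) (by simpa using hxr)
    have h5 : α (φ i) * u (φ i) x = (f (φ i) (e.symm x)).re := by
      rw [hfre, hFu _ _ hx1]
      simp [← hedef]
    rw [h5, Real.dist_eq, ← Complex.sub_re]
    rw [dist_eq_norm] at h3
    exact (Complex.abs_re_le_norm _).trans_lt h3
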